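/- arXiv:2601.21556 — 10 statements merged into one kernel-verified Lean document; each statement's English description precedes it below -/
import Mathlib

section
/- Let R be a ring, 𝒰 a family of left R-modules, and h : M → N a surjective R-linear map of left R-modules such that ker(h) ⊆ Rej_M(𝒰). Then h(JRej_M(𝒰)) = JRej_N(𝒰). -/
/-- The radical of a module: the intersection of all maximal submodules. -/
def moduleRad (R M : Type*) [Ring R] [AddCommGroup M] [Module R M] : Submodule R M :=
  sInf {N : Submodule R M | IsCoatom N}

/-- The JReject of a family of modules `U` in `M`. -/
def jRej (R M : Type*) [Ring R] [AddCommGroup M] [Module R M]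
    {ι : Type*} (U : ι → Type*) [∀ i, AddCommGroup (U i)] [∀ i, Module R (U i)] :
    Submodule R M :=
  ⨅ (i : ι) (f : M →ₗ[R] U i), (moduleRad R (U i)).comap f

/-- The reject of a family of modules `U` in `M`: the intersection of the kernels of all
linear maps from `M` to members of the family. -/
def rej (R M : Type*) [Ring R] [AddCommGroup M] [Module R M]
    {ι : Type*} (U : ι → Type*) [∀ i, AddCommGroup (U i)] [∀ i, Module R (U i)] :
    Submodule R M :=
  ⨅ (i : ι) (f : M →ₗ[R] U i), LinearMap.ker f

/-- If `h : M → N` is surjective with `ker h ⊆ Rej_M(𝒰)`, then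
`h(JRej_M(𝒰)) = JRej_N(𝒰)`. -/
theorem map_jRej_eq (R M N : Type*) [Ring R] [AddCommGroup M] [Module R M]
    [AddCommGroup N] [Module R N]
    {ι : Type*} (U : ι → Type*) [∀ i, AddCommGroup (U i)] [∀ i, Module R (U i)]
    (h : M →ₗ[R] N) (hsurj : Function.Surjective h)
    (hker : LinearMap.ker h ≤ rej R M U) :
    (jRej R M U).map h = jRej R N U := by
  have memJ : ∀ x : M, x ∈ jRej R M U ↔ ∀ i, ∀ f : M →ₗ[R] U i, f x ∈ moduleRad R (U i) := by
    intro x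
    simp only [jRej, Submodule.mem_iInf, Submodule.mem_comap]
  have memJN : ∀ x : N, x ∈ jRej R N U ↔ ∀ i, ∀ f : N →ₗ[R] U i, f x ∈ moduleRad R (U i) := by
    intro x
    simp only [jRej, Submodule.mem_iInf, Submodule.mem_comap]
  ext n
  rw [Submodule.mem_map, memJN]
  constructor
  · rintro ⟨m, hm, rfl⟩ i f
    exact (memJ m).1 hm i (f.comp h)
  · intro hn
    obtain ⟨m, rfl⟩ := hsurj n
    refine ⟨m, (memJ m).2 fun i f => ?_, rfl⟩
    have hf : LinearMap.ker h ≤ LinearMap.ker f :=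
      hker.trans ((iInf_le _ i).trans (iInf_le _ f))
    have key := hn i (((LinearMap.ker h).liftQ f hf).comp
      (h.quotKerEquivOfSurjective hsurj).symm.toLinearMap)
    have e : (h.quotKerEquivOfSurjective hsurj).symm (h m) = (LinearMap.ker h).mkQ m := by
      rw [LinearEquiv.symm_apply_eq]
      rfl
    rw [LinearMap.comp_apply, LinearEquiv.coe_coe, e] at key
    simpa using key
end

section
/- Let R be a ring and M a left R-module. The quotient module M/Rad(M) is a faithful R-module if and only if M/Rad(M) cogenerates R (viewed as a left module over itself). -/
universe u

/-- `M/Rad(M)` is a faithful `R`-module iff `M/Rad(M)` cogenerates `R`, i.e. iff there is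
an injective linear map from `R` into a direct product of copies of `M/Rad(M)`. -/
theorem quotient_rad_faithful_iff_cogenerates (R M : Type u) [Ring R] [AddCommGroup M]
    [Module R M] :
    (∀ r : R, (∀ x : M ⧸ moduleRad R M, r • x = 0) → r = 0) ↔
      ∃ (A : Type u) (φ : R →ₗ[R] (A → M ⧸ moduleRad R M)), Function.Injective φ := by
  constructor
  · intro h
    refine ⟨M ⧸ moduleRad R M, LinearMap.pi fun x => LinearMap.toSpanSingleton R _ x, ?_⟩
    rw [injective_iff_map_eq_zero]
    intro r hr
    apply h
    intro x
    have := congrFun hr x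
    simpa using this
  · rintro ⟨A, φ, hφ⟩ r hr
    apply hφ
    rw [map_zero]
    have h1 : φ r = r • φ 1 := by rw [← map_smul, smul_eq_mul, mul_one]
    rw [h1]
    funext a
    exact hr (φ 1 a)
end

section
/- If a left R-module M is W-regular, i.e., M is projective and every cyclic submodule of M is a direct summand of M, then M is J-torsionless. -/
/-- A module `M` is J-torsionless if for every nonzero `m ∈ M` there is a linear map
`f : M → R` with `f m ∉ J(R)`, where `J(R)` is the Jacobson radical of `R`. -/
def IsJTorsionless (R M : Type*) [Ring R] [AddCommGroup M] [Module R M] : Prop :=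
  ∀ m : M, m ≠ 0 → ∃ f : M →ₗ[R] R, f m ∉ Ideal.jacobson (⊥ : Ideal R)

/-- If `M` is W-regular (projective and every cyclic submodule is a direct summand),
then `M` is J-torsionless. -/
theorem isJTorsionless_of_wRegular (R M : Type*) [Ring R] [AddCommGroup M] [Module R M]
    (hproj : Module.Projective R M)
    (hcyc : ∀ m : M, ∃ N : Submodule R M, IsCompl (Submodule.span R {m}) N) :
    IsJTorsionless R M := by
  intro m hm
  obtain ⟨N, hN⟩ := hcyc m
  obtain ⟨f, hf⟩ := Module.projective_lifting_property
    (LinearMap.toSpanSingleton R M m).rangeRestrict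
    ((Submodule.inclusion (LinearMap.range_toSpanSingleton (R := R) m).ge).comp
      (Submodule.projectionOnto _ N hN))
    (LinearMap.surjective_rangeRestrict _)
  have h1 : f m • m = m := by
    have h := congrArg Subtype.val (LinearMap.congr_fun hf m)
    have h2 := Submodule.projectionOnto_apply_left hN
      ⟨m, Submodule.mem_span_singleton_self m⟩
    have h4 : f m • m = ((Submodule.span R {m}).projectionOnto N hN m : M) := by simpa using h
    exact h4.trans (congrArg Subtype.val h2)
  refine ⟨f, fun hJ => hm ?_⟩
  obtain ⟨z, hz⟩ := Ideal.mem_jacobson_iff.1 hJ (-1)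
  rw [Ideal.mem_bot] at hz
  have h3 : (z * -1 * f m + z - 1) • m = -m := by
    simp [sub_smul, add_smul, mul_smul, h1]
  rw [hz, zero_smul] at h3
  exact neg_eq_zero.1 h3.symm
end

section
/- Let R be a semiprime ring and T a simple left R-module. If T is torsionless, then T is J-torsionless. -/
/-- A ring `R` is semiprime if it has no nonzero nilpotent two-sided ideal:
every two-sided ideal `I` with `I^n = 0` for some `n > 0` (i.e. every product of `n`
elements of `I` vanishes) is zero. -/
def IsSemiprimeRing (R : Type*) [Ring R] : Prop :=
  ∀ I : TwoSidedIdeal R,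
    (∃ n : ℕ, 0 < n ∧ ∀ f : Fin n → R, (∀ i, f i ∈ I) → (List.ofFn f).prod = 0) → I = ⊥

/-- A module `M` is torsionless if for every nonzero `m ∈ M` there is a linear map
`f : M → R` with `f m ≠ 0`. -/
def IsTorsionless (R M : Type*) [Ring R] [AddCommGroup M] [Module R M] : Prop :=
  ∀ m : M, m ≠ 0 → ∃ f : M →ₗ[R] R, f m ≠ 0

/-- A simple torsionless module over a semiprime ring is J-torsionless. -/
theorem isJTorsionless_of_simple_torsionless (R T : Type*) [Ring R] [AddCommGroup T]
    [Module R T] [IsSimpleModule R T]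
    (hR : IsSemiprimeRing R) (hT : IsTorsionless R T) :
    IsJTorsionless R T := by
  intro m hm
  obtain ⟨f, hf⟩ := hT m hm
  refine ⟨f, fun hx => hf ?_⟩
  rw [Ideal.jacobson_bot] at hx
  have hJT : ∀ j ∈ Ring.jacobson R, ∀ t : T, j • t = 0 := by
    intro j hj t
    have h := Ring.jacobson_smul_top_le R T
      (Submodule.smul_mem_smul hj (Submodule.mem_top : t ∈ (⊤ : Submodule R T)))
    rw [IsSemisimpleModule.jacobson_eq_bot R T] at h
    simpa using h
  -- the two-sided ideal of elements of `J` killed by `J` on the left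
  let I : TwoSidedIdeal R := TwoSidedIdeal.mk'
    {r : R | r ∈ Ring.jacobson R ∧ ∀ j ∈ Ring.jacobson R, j * r = 0}
    ⟨zero_mem _, fun j _ => mul_zero j⟩
    (fun {a b} ha hb => ⟨add_mem ha.1 hb.1, fun j hj => by
      rw [mul_add, ha.2 j hj, hb.2 j hj, add_zero]⟩)
    (fun {a} ha => ⟨neg_mem ha.1, fun j hj => by rw [mul_neg, ha.2 j hj, neg_zero]⟩)
    (fun {a b} hb => ⟨Ideal.mul_mem_left _ a hb.1, fun j hj => by
      rw [← mul_assoc, hb.2 _ (Ideal.mul_mem_right a _ hj)]⟩)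
    (fun {a b} ha => ⟨Ideal.mul_mem_right b _ ha.1, fun j hj => by
      rw [← mul_assoc, ha.2 j hj, zero_mul]⟩)
  have hI : ∀ r, r ∈ I ↔ r ∈ Ring.jacobson R ∧ ∀ j ∈ Ring.jacobson R, j * r = 0 := by
    intro r
    exact TwoSidedIdeal.mem_mk' _ _ _ _ _ _ _
  have hbot : I = ⊥ := by
    refine hR I ⟨2, by norm_num, fun g hg => ?_⟩
    have h0 := (hI _).1 (hg 0)
    have h1 := (hI _).1 (hg 1)
    simpa [List.ofFn_succ] using h1.2 _ h0.1
  have hxI : f m ∈ I := (hI _).2 ⟨hx, fun j hj => by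
    rw [← smul_eq_mul, ← map_smul, hJT j hj m, map_zero]⟩
  rw [hbot] at hxI
  simpa using hxI
end

section
/- Let R be a semiprime ring and T a semi-simple left R-module (a direct sum of simple modules). If T is torsionless, then T is J-torsionless. -/
/-- A semi-simple torsionless module over a semiprime ring is J-torsionless. -/
theorem isJTorsionless_of_semisimple_torsionless (R T : Type*) [Ring R] [AddCommGroup T]
    [Module R T] [IsSemisimpleModule R T]
    (hR : IsSemiprimeRing R) (hT : IsTorsionless R T) :
    IsJTorsionless R T := by
  intro m hm
  obtain ⟨f, hf⟩ := hT m hm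
  refine ⟨f, fun hJ => hf ?_⟩
  have hA : f m ∈ Module.annihilator R T := by
    apply IsSemisimpleModule.jacobson_le_annihilator R T
    rwa [Ideal.jacobson_bot] at hJ
  have hA' : ∀ t : T, f m • t = 0 := Module.mem_annihilator.mp hA
  -- the two-sided ideal of elements killing `T` and killed by the annihilator of `T`
  let K : TwoSidedIdeal R := TwoSidedIdeal.mk'
    {y : R | (∀ t : T, y • t = 0) ∧ ∀ a : R, (∀ t : T, a • t = 0) → a * y = 0}
    ⟨by simp, by simp⟩
    (by
      rintro x y ⟨hx, hx'⟩ ⟨hy, hy'⟩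
      exact ⟨fun t => by rw [add_smul, hx, hy, add_zero],
        fun a ha => by rw [mul_add, hx' a ha, hy' a ha, add_zero]⟩)
    (by
      rintro x ⟨hx, hx'⟩
      exact ⟨fun t => by rw [neg_smul, hx, neg_zero],
        fun a ha => by rw [mul_neg, hx' a ha, neg_zero]⟩)
    (by
      rintro x y ⟨hy, hy'⟩
      exact ⟨fun t => by rw [mul_smul, hy, smul_zero],
        fun a ha => by
          rw [← mul_assoc]
          exact hy' _ (fun t => by rw [mul_smul, ha])⟩)
    (by
      rintro x y ⟨hx, hx'⟩
      exact ⟨fun t => by rw [mul_smul, hx],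
        fun a ha => by rw [← mul_assoc, hx' a ha, zero_mul]⟩)
  have hK : ∀ y : R, y ∈ K ↔
      (∀ t : T, y • t = 0) ∧ ∀ a : R, (∀ t : T, a • t = 0) → a * y = 0 := by
    intro y
    exact TwoSidedIdeal.mem_mk' _ _ _ _ _ _ _
  have hbot : K = ⊥ := by
    refine hR K ⟨2, by norm_num, fun g hg => ?_⟩
    have h0 := (hK _).1 (hg 0)
    have h1 := (hK _).1 (hg 1)
    simpa using h1.2 _ h0.1
  have hmem : f m ∈ K := by
    refine (hK _).2 ⟨hA', fun a ha => ?_⟩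
    rw [← smul_eq_mul, ← map_smul, ha, map_zero]
  rw [hbot] at hmem
  exact (TwoSidedIdeal.mem_bot R).1 hmem
end

section
/- Let M be a finitely generated left module over a semiprime ring R. If every simple factor module of M is torsionless, then M is J-torsionless. -/
theorem aux_idem {R : Type*} [Ring R] (hR : IsSemiprimeRing R) (L : Ideal R) (hL : IsAtom L) :
    ∃ e ∈ L, e * e = e ∧ e ≠ 0 := by
  have h1 : ∃ a ∈ L, ∃ b ∈ L, a * b ≠ 0 := by
    by_contra! hcon
    have hLL : L * L = ⊥ := by
      rw [eq_bot_iff, Ideal.mul_le]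
      intro a ha b hb
      simpa using hcon a ha b hb
    have hT : (⊤ : Ideal R) * L ≤ L := by
      rw [Ideal.mul_le]
      intro r _ s hs
      exact L.mul_mem_left r hs
    have hsq : (L * ⊤) * (L * ⊤) = (⊥ : Ideal R) := by
      rw [eq_bot_iff]
      calc (L * ⊤) * (L * ⊤) = L * (⊤ * L) * ⊤ := by simp only [mul_assoc]
        _ ≤ L * L * ⊤ := by gcongr
        _ ≤ ⊥ := by
          rw [hLL, Ideal.mul_le]
          intro r hr s _
          rw [Ideal.mem_bot] at hr
          simp [hr]
    have hI := hR (L * ⊤ : Ideal R).toTwoSided ⟨2, by norm_num, by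
      intro f hf
      have h0 := hf 0
      have h1 := hf 1
      rw [Ideal.mem_toTwoSided] at h0 h1
      have := Ideal.mul_mem_mul h0 h1
      rw [hsq, Ideal.mem_bot] at this
      simpa [List.ofFn_succ] using this⟩
    apply hL.1
    rw [eq_bot_iff]
    intro a ha
    have : a * 1 ∈ L * (⊤ : Ideal R) := Ideal.mul_mem_mul ha trivial
    rw [← Ideal.mem_toTwoSided, hI, mul_one, TwoSidedIdeal.mem_bot] at this
    simpa using this
  obtain ⟨a, ha, b, hb, hab⟩ := h1
  let φ : R →ₗ[R] R := LinearMap.toSpanSingleton R R b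
  have hφ : ∀ r, φ r = r * b := fun r => rfl
  have hle : Submodule.map φ L ≤ L := by
    rintro _ ⟨r, _, rfl⟩
    exact L.mul_mem_left r hb
  have hmap : Submodule.map φ L = L := by
    rcases hL.le_iff.1 hle with h | h
    · exfalso
      have : φ a ∈ Submodule.map φ L := Submodule.mem_map_of_mem ha
      rw [h] at this
      exact hab ((Submodule.mem_bot R).1 this)
    · exact h
  have hker : L ⊓ LinearMap.ker φ = ⊥ := by
    rcases hL.le_iff.1 (inf_le_left : L ⊓ LinearMap.ker φ ≤ L) with h | h
    · exact h
    · exfalso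
      have : a ∈ L ⊓ LinearMap.ker φ := by rw [h]; exact ha
      exact hab this.2
  have hb' : b ∈ Submodule.map φ L := hmap.symm ▸ hb
  obtain ⟨e, he, heb⟩ := hb'
  rw [hφ] at heb
  refine ⟨e, he, ?_, ?_⟩
  · have : e * e - e ∈ L ⊓ LinearMap.ker φ := by
      refine ⟨L.sub_mem (L.mul_mem_left e he) he, ?_⟩
      change φ _ = 0
      rw [hφ, sub_mul, mul_assoc, heb, heb, sub_self]
    rw [hker, Submodule.mem_bot] at this
    exact sub_eq_zero.1 this
  · rintro rfl
    rw [zero_mul] at heb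
    exact hab (by rw [← heb, mul_zero])

theorem aux_coatom {R M : Type*} [Ring R] [AddCommGroup M] [Module R M]
    (hR : IsSemiprimeRing R) (N : Submodule R M) (hN : IsCoatom N)
    (h : IsTorsionless R (M ⧸ N)) :
    ∃ (f : M →ₗ[R] R) (x : M), LinearMap.ker f = N ∧ IsAtom (LinearMap.range f) ∧
      f x * f x = f x ∧ f x ≠ 0 := by
  obtain ⟨y, -, hy⟩ := SetLike.exists_of_lt hN.lt_top
  obtain ⟨g, hg⟩ := h (N.mkQ y) (by simpa using hy)
  have hker : LinearMap.ker (g ∘ₗ N.mkQ) = N := by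
    have hle : N ≤ LinearMap.ker (g ∘ₗ N.mkQ) := by
      intro n hn
      have : N.mkQ n = 0 := by simpa using hn
      rw [LinearMap.mem_ker, LinearMap.comp_apply, this, map_zero]
    rcases hN.le_iff.1 hle with h | h
    · exfalso
      have : y ∈ LinearMap.ker (g ∘ₗ N.mkQ) := h ▸ trivial
      exact hg this
    · exact h
  have hat : IsAtom (LinearMap.range (g ∘ₗ N.mkQ)) := by
    rw [← isSimpleModule_iff_isAtom]
    have : IsSimpleModule R (M ⧸ LinearMap.ker (g ∘ₗ N.mkQ)) := by
      rw [isSimpleModule_iff_isCoatom, hker]; exact hN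
    exact IsSimpleModule.congr (LinearMap.quotKerEquivRange (g ∘ₗ N.mkQ)).symm
  obtain ⟨e, ⟨x, rfl⟩, h1, h2⟩ := aux_idem hR _ hat
  exact ⟨_, x, hker, hat, h1, h2⟩

/-- If `M` is a finitely generated module over a semiprime ring `R` all of whose simple
factor modules (quotients by maximal submodules) are torsionless, then `M` is
J-torsionless. -/
theorem isJTorsionless_of_simple_factors_torsionless (R M : Type*) [Ring R]
    [AddCommGroup M] [Module R M] [Module.Finite R M]
    (hR : IsSemiprimeRing R)
    (hfac : ∀ N : Submodule R M, IsCoatom N → IsTorsionless R (M ⧸ N)) :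
    IsJTorsionless R M := by
  have hss : IsSemisimpleModule R M := by
    refine sSup_simples_eq_top_iff_isSemisimpleModule.1 ?_
    by_contra hne
    obtain ⟨N, hN, hle⟩ := (eq_top_or_exists_le_coatom _).resolve_left hne
    obtain ⟨f, x, hk, hat, hee, he0⟩ := aux_coatom hR N hN (hfac N hN)
    set z := f x • x with hz
    have hfz : f z = f x := by rw [hz, map_smul, smul_eq_mul, hee]
    have hinj : Disjoint (Submodule.span R {z}) (LinearMap.ker f) := by
      rw [Submodule.disjoint_def]
      intro w hw hw0
      obtain ⟨r, rfl⟩ := Submodule.mem_span_singleton.1 hw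
      rw [LinearMap.mem_ker, map_smul, hfz, smul_eq_mul] at hw0
      rw [hz, smul_smul, hw0, zero_smul]
    have hzN : z ∉ N := by
      rw [← hk, LinearMap.mem_ker, hfz]; exact he0
    have hsimple : IsSimpleModule R (Submodule.span R {z}) := by
      have hc : IsCompl (LinearMap.ker f) (Submodule.span R {z}) := by
        refine ⟨hinj.symm, ?_⟩
        rw [codisjoint_iff, hk]
        apply hN.2
        refine lt_of_le_of_ne le_sup_left fun h => hzN ?_
        rw [h]
        exact Submodule.mem_sup_right (Submodule.mem_span_singleton_self z)
      have : IsSimpleModule R (M ⧸ LinearMap.ker f) := by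
        rw [isSimpleModule_iff_isCoatom, hk]; exact hN
      exact IsSimpleModule.congr (Submodule.quotientEquivOfIsCompl _ _ hc).symm
    exact hzN (hle ((le_sSup (show Submodule.span R {z} ∈ {m : Submodule R M | IsSimpleModule R m} from hsimple))
      (Submodule.mem_span_singleton_self z)))
  intro m hm
  obtain ⟨C, hC⟩ := exists_isCompl (Submodule.span R {m})
  have hCt : C ≠ ⊤ := by
    rintro rfl
    have := hC.disjoint
    rw [disjoint_top, Submodule.span_singleton_eq_bot] at this
    exact hm this
  obtain ⟨N, hN, hle⟩ := (eq_top_or_exists_le_coatom C).resolve_left hCt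
  have hmN : m ∉ N := by
    intro h
    apply hN.1
    rw [eq_top_iff, ← hC.sup_eq_top]
    exact sup_le ((Submodule.span_singleton_le_iff_mem m N).2 h) hle
  obtain ⟨f, x, hk, hat, hee, he0⟩ := aux_coatom hR N hN (hfac N hN)
  refine ⟨f, fun hJ => he0 ?_⟩
  have hfm : f m ≠ 0 := by
    rw [← hk] at hmN; exact hmN
  have hxJ : f x ∈ Ideal.jacobson (⊥ : Ideal R) := by
    have hs : Submodule.span R {f m} ≤ LinearMap.range f :=
      (Submodule.span_singleton_le_iff_mem _ _).2 ⟨m, rfl⟩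
    rcases hat.le_iff.1 hs with h | h
    · exact absurd (Submodule.span_singleton_eq_bot.1 h) hfm
    · have : f x ∈ Submodule.span R {f m} := h ▸ ⟨x, rfl⟩
      exact (Submodule.span_singleton_le_iff_mem _ _).2 hJ this
  obtain ⟨z, hz⟩ := Ideal.mem_jacobson_iff.1 hxJ (-1)
  rw [Ideal.mem_bot] at hz
  have h2 : (z * (-1) * f x + z - 1) * f x = 0 := by rw [hz, zero_mul]
  rw [sub_mul, add_mul, mul_assoc _ (f x), hee, one_mul] at h2
  simpa using h2
end

section
/- Let R be a semiprime ring. If every simple left R-module is torsionless, then R is a semi-simple ring (i.e., R is semisimple as a left module over itself). -/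
universe u

theorem aux_semiprime {R : Type u} [Ring R] (hR : IsSemiprimeRing R) (a : R)
    (ha : ∀ r, a * r * a = 0) : a = 0 := by
  let J : TwoSidedIdeal R := TwoSidedIdeal.mk' {x | ∀ r, x * r * a = 0}
    (by simp) (by intro x y hx hy r; simp [add_mul, hx r, hy r])
    (by intro x hx r; simp [hx r])
    (by intro x y hy r; rw [mul_assoc x, mul_assoc x, hy r, mul_zero])
    (by intro x y hx r; rw [mul_assoc x, hx])
  have hJ : TwoSidedIdeal.span {a} ≤ J := by
    rw [TwoSidedIdeal.span_le]
    intro x hx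
    obtain rfl : x = a := hx
    simpa [J, TwoSidedIdeal.mem_mk'] using ha
  let K : TwoSidedIdeal R := TwoSidedIdeal.mk' {y | ∀ x ∈ J, x * y = 0}
    (by simp) (by intro x y hx hy r hr; simp [mul_add, hx r hr, hy r hr])
    (by intro x hx r hr; simp [hx r hr])
    (by intro x y hy r hr; rw [← mul_assoc, hy _ (J.mul_mem_right _ _ hr)])
    (by intro x y hx r hr; rw [← mul_assoc, hx _ hr, zero_mul])
  have hK : TwoSidedIdeal.span {a} ≤ K := by
    rw [TwoSidedIdeal.span_le]
    intro x hx
    obtain rfl : x = a := hx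
    have : ∀ y ∈ J, y * x = 0 := by
      intro y hy
      have h : ∀ r, y * r * x = 0 := by simpa [J, TwoSidedIdeal.mem_mk'] using hy
      simpa using h 1
    simpa [K, TwoSidedIdeal.mem_mk'] using this
  have hbot := hR (TwoSidedIdeal.span {a}) ⟨2, by norm_num, fun f hf => by
    have h1 := hJ (hf 0)
    have h2 : ∀ x ∈ J, x * f 1 = 0 := by
      have := hK (hf 1)
      simpa [K, TwoSidedIdeal.mem_mk'] using this
    simpa [List.ofFn_succ] using h2 _ h1⟩
  have : a ∈ TwoSidedIdeal.span {a} := TwoSidedIdeal.subset_span (by simp)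
  rw [hbot] at this
  simpa using this

/-- If `R` is a semiprime ring all of whose simple left modules are torsionless, then `R`
is a semisimple ring. -/
theorem isSemisimpleRing_of_simples_torsionless (R : Type u) [Ring R]
    (hR : IsSemiprimeRing R)
    (hsimple : ∀ (T : Type u) [AddCommGroup T] [Module R T],
      IsSimpleModule R T → IsTorsionless R T) :
    IsSemisimpleRing R := by
  by_contra hns
  have hS : sSup {m : Submodule R R | IsSimpleModule R m} ≠ ⊤ := by
    intro h
    exact hns ((sSup_simples_eq_top_iff_isSemisimpleModule).1 h)
  obtain ⟨m, hm, hle⟩ := Ideal.exists_le_maximal _ hS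
  have hsm : IsSimpleModule R (R ⧸ m) := isSimpleModule_iff_isCoatom.2 hm.out
  have h1 : (Submodule.Quotient.mk 1 : R ⧸ m) ≠ 0 := by
    rw [Ne, Submodule.Quotient.mk_eq_zero]
    exact fun h => hm.ne_top ((Ideal.eq_top_iff_one m).2 h)
  obtain ⟨f, hf⟩ := hsimple _ hsm _ h1
  apply hf
  have hma : ∀ x ∈ m, x * f (Submodule.Quotient.mk 1) = 0 := by
    intro x hx
    rw [← smul_eq_mul, ← map_smul, ← Submodule.Quotient.mk_smul, smul_eq_mul, mul_one,
      (Submodule.Quotient.mk_eq_zero m).2 hx, map_zero]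
  apply aux_semiprime hR
  intro r
  apply hma
  let g : (R ⧸ m) →ₗ[R] R := (LinearMap.toSpanSingleton R R r).comp f
  have hg : g (Submodule.Quotient.mk 1) = f (Submodule.Quotient.mk 1) * r := by
    simp [g]
  rw [← hg]
  rcases LinearMap.injective_or_eq_zero g with hi | h0
  · apply hle
    have : IsSimpleModule R (LinearMap.range g) :=
      IsSimpleModule.congr (LinearEquiv.ofInjective g hi).symm
    exact (le_sSup (a := LinearMap.range g) this) (LinearMap.mem_range_self g _)
  · rw [h0]; exact m.zero_mem
end

section
/- For a left R-module M, the following are equivalent: (1) M is (Zelmanowitz) regular, i.e., for every m ∈ M there exists f ∈ M* with m = f(m)·m; (2) M is J-torsionless and for every m ∈ M the right ideal mM* = {f(m) | f ∈ M*} equals eR for some idempotent e of R; (3) M is torsionless and for every m ∈ M the right ideal mM* equals eR for some idempotent e of R. -/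
/-- For a module `M`, the following are equivalent:
(1) `M` is (Zelmanowitz) regular: for every `m` there is `f ∈ M*` with `m = f m • m`;
(2) `M` is J-torsionless and for every `m`, `mM* = eR` for some idempotent `e`;
(3) `M` is torsionless and for every `m`, `mM* = eR` for some idempotent `e`. -/
theorem regular_tfae (R M : Type*) [Ring R] [AddCommGroup M] [Module R M] :
    List.TFAE
      [∀ m : M, ∃ f : M →ₗ[R] R, m = f m • m,
       IsJTorsionless R M ∧ ∀ m : M, ∃ e : R, IsIdempotentElem e ∧
         {x : R | ∃ f : M →ₗ[R] R, f m = x} = {x : R | ∃ r : R, x = e * r},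
       IsTorsionless R M ∧ ∀ m : M, ∃ e : R, IsIdempotentElem e ∧
         {x : R | ∃ f : M →ₗ[R] R, f m = x} = {x : R | ∃ r : R, x = e * r}] := by
  tfae_have 1 → 2 := by
    intro h
    refine ⟨?_, ?_⟩
    · intro m hm
      obtain ⟨f, hf⟩ := h m
      refine ⟨f, fun hJ => hm ?_⟩
      have hid : f m = f m * f m := by
        have h1 := congrArg f hf
        rwa [map_smul, smul_eq_mul] at h1
      rw [Ideal.mem_jacobson_iff] at hJ
      obtain ⟨z, hz⟩ := hJ (-1)
      rw [Ideal.mem_bot] at hz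
      have h0 : f m = 0 := by
        have h2 : (z * -1 * f m + z - 1) * f m = 0 := by rw [hz, zero_mul]
        have h3 : (z * -1 * f m + z - 1) * f m = z * f m - z * (f m * f m) - f m := by
          noncomm_ring
        rw [h3, ← hid, sub_self, zero_sub, neg_eq_zero] at h2
        exact h2
      rw [hf, h0, zero_smul]
    · intro m
      obtain ⟨f, hf⟩ := h m
      have key : ∀ g : M →ₗ[R] R, g m = f m * g m := by
        intro g
        have h1 := congrArg g hf
        rwa [map_smul, smul_eq_mul] at h1
      refine ⟨f m, (key f).symm, ?_⟩
      ext x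
      constructor
      · rintro ⟨g, rfl⟩
        exact ⟨g m, key g⟩
      · rintro ⟨r, rfl⟩
        exact ⟨f.smulRight r, by simp⟩
  tfae_have 2 → 3 := by
    rintro ⟨h, h'⟩
    refine ⟨fun m hm => ?_, h'⟩
    obtain ⟨f, hf⟩ := h m hm
    exact ⟨f, fun h0 => hf (by rw [h0]; exact Submodule.zero_mem _)⟩
  tfae_have 3 → 1 := by
    rintro ⟨h, h'⟩ m
    obtain ⟨e, he, hS⟩ := h' m
    have h1 : e ∈ {x : R | ∃ f : M →ₗ[R] R, f m = x} := by
      rw [hS]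
      exact ⟨1, (mul_one e).symm⟩
    obtain ⟨f, hf⟩ := h1
    refine ⟨f, ?_⟩
    rw [hf]
    by_contra hne
    obtain ⟨g, hg⟩ := h (m - e • m) (sub_ne_zero.mpr hne)
    apply hg
    have h2 : g m ∈ {x : R | ∃ r : R, x = e * r} := by
      rw [← hS]
      exact ⟨g, rfl⟩
    obtain ⟨r, hr⟩ := h2
    rw [map_sub, map_smul, smul_eq_mul, hr, ← mul_assoc, he.eq, sub_self]
  tfae_finish
end

section
/- If a left R-module M is fully idempotent, i.e., for every m ∈ M one has Rm = (R·mM*)·m, where R·mM* is the left ideal of R generated by {f(m) | f ∈ M*} (so every element of Rm is a finite sum Σᵢ rᵢ fᵢ(m) m with rᵢ ∈ R, fᵢ ∈ M*), then M is J-torsionless. -/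
/-- If `M` is fully idempotent, i.e. for every `m ∈ M` the cyclic submodule `Rm` equals
`(R·mM*)·m` — every element of `Rm` is a finite sum `Σᵢ rᵢ • (fᵢ m) • m` with `rᵢ ∈ R`,
`fᵢ ∈ M*` — then `M` is J-torsionless. -/
theorem isJTorsionless_of_fullyIdempotent (R M : Type*) [Ring R] [AddCommGroup M]
    [Module R M]
    (hfi : ∀ m : M, (Submodule.span R {m} : Set M) =
      {x : M | ∃ (n : ℕ) (r : Fin n → R) (f : Fin n → (M →ₗ[R] R)),
        x = ∑ i : Fin n, (r i * (f i) m) • m}) :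
    IsJTorsionless R M := by
  intro m hm
  by_contra! hf
  apply hm
  have h1 : m ∈ (Submodule.span R {m} : Set M) := Submodule.mem_span_singleton_self m
  rw [hfi m] at h1
  obtain ⟨n, r, f, hx⟩ := h1
  rw [← Finset.sum_smul] at hx
  have ha : (∑ i : Fin n, r i * (f i) m) ∈ Ideal.jacobson (⊥ : Ideal R) :=
    Ideal.sum_mem _ fun i _ => Ideal.mul_mem_left _ _ (hf (f i))
  generalize (∑ i : Fin n, r i * (f i) m) = a at hx ha
  obtain ⟨z, hz⟩ := Ideal.mem_jacobson_iff.1 ha (-1)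
  rw [Ideal.mem_bot, sub_eq_zero] at hz
  have h2 : (z * (-1) * a + z) • m = m := by rw [hz, one_smul]
  rw [add_smul, mul_smul, ← hx, mul_neg, mul_one, neg_smul, neg_add_cancel] at h2
  exact h2.symm
end

section
/- For a ring R, the following are equivalent: (1) every semi-simple left R-module is J-torsionless; (2) every simple left R-module is J-torsionless; (3) every maximal left ideal μ of R satisfies μ = (J(R) : r_R(μ))_l, i.e., μ = {t ∈ R | t·a ∈ J(R) for all a ∈ r_R(μ)}. -/
universe u

/-- For a ring `R`, the following are equivalent:
(1) every semi-simple left `R`-module is J-torsionless;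
(2) every simple left `R`-module is J-torsionless;
(3) every maximal left ideal `μ` of `R` satisfies `μ = (J(R) : r_R(μ))_l`. -/
theorem semisimple_jTorsionless_tfae (R : Type u) [Ring R] :
    List.TFAE
      [∀ (M : Type u) [AddCommGroup M] [Module R M],
         IsSemisimpleModule R M → IsJTorsionless R M,
       ∀ (M : Type u) [AddCommGroup M] [Module R M],
         IsSimpleModule R M → IsJTorsionless R M,
       ∀ μ : Ideal R, μ.IsMaximal → ∀ t : R,
         t ∈ μ ↔ ∀ a : R, (∀ x ∈ μ, x * a = 0) → t * a ∈ Ideal.jacobson (⊥ : Ideal R)] := by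
  tfae_have 1 → 2 := by
    intro h M _ _ hM
    exact h M inferInstance
  tfae_have 2 → 3 := by
    intro h μ hμ t
    constructor
    · intro ht a ha
      rw [ha t ht]
      exact Submodule.zero_mem _
    · intro H
      by_contra ht
      have hs : IsSimpleModule R (R ⧸ μ) := isSimpleModule_iff_isCoatom.mpr hμ.out
      obtain ⟨f, hf⟩ := h (R ⧸ μ) hs (Submodule.Quotient.mk t)
        (fun h0 => ht ((Submodule.Quotient.mk_eq_zero μ).mp h0))
      have key : ∀ x : R, x * f (Submodule.Quotient.mk 1) = f (Submodule.Quotient.mk x) := by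
        intro x
        rw [← smul_eq_mul, ← map_smul, ← Submodule.Quotient.mk_smul, smul_eq_mul, mul_one]
      apply hf
      rw [← key]
      apply H
      intro x hx
      rw [key, (Submodule.Quotient.mk_eq_zero μ).mpr hx, map_zero]
  tfae_have 3 → 1 := by
    intro h M _ _ hM m hm
    have hj : m ∉ Module.jacobson R M := by
      rw [IsSemisimpleModule.jacobson_eq_bot R M]
      simpa using hm
    rw [Module.jacobson, Submodule.mem_sInf] at hj
    push Not at hj
    obtain ⟨N, hN, hmN⟩ := hj
    have hs : IsSimpleModule R (M ⧸ N) := isSimpleModule_iff_isCoatom.mpr hN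
    have hm0 : N.mkQ m ≠ 0 := by simpa using hmN
    let g := LinearMap.toSpanSingleton R (M ⧸ N) (N.mkQ m)
    have hg : Function.Surjective g := IsSimpleModule.toSpanSingleton_surjective R hm0
    have hmax : Ideal.IsMaximal (LinearMap.ker g) :=
      IsSimpleModule.ker_toSpanSingleton_isMaximal R hm0
    have h1 : (1 : R) ∉ LinearMap.ker g := by
      simpa [g] using hmN
    rw [h _ hmax] at h1
    push Not at h1
    obtain ⟨a, ha, haJ⟩ := h1
    let e := g.quotKerEquivOfSurjective hg
    let φ : (R ⧸ LinearMap.ker g) →ₗ[R] R :=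
      (LinearMap.ker g).liftQ (LinearMap.toSpanSingleton R R a) (fun x hx => by
        simpa using ha x hx)
    refine ⟨φ ∘ₗ e.symm.toLinearMap ∘ₗ N.mkQ, ?_⟩
    have he : e.symm (N.mkQ m) = Submodule.Quotient.mk 1 := by
      rw [LinearEquiv.symm_apply_eq]
      change _ = g 1
      simp [g]
    have : (φ ∘ₗ e.symm.toLinearMap ∘ₗ N.mkQ) m = 1 * a := by
      change φ (e.symm (N.mkQ m)) = _
      rw [he]
      rfl
    rwa [this]
  tfae_finish
end
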